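/- Under the time evolution c_p(t) = c_p(0) e^{ξ_p t}, for all integers i, j, every integer k ≥ 0 and every t ∈ ℝ, the determinant τ_k^{(i,j)}(t) is twice differentiable in t and satisfies (d/dt) τ_k^{(i,j)}(t) = − ρ_{k+1}^{(i,j)}(t), (d/dt) τ_k^{(i,j)}(t) = ω_k^{(i,j)}(t) + ω_k^{(j,i)}(t), and (d²/dt²) τ_k^{(i,j)}(t) = − ν_{k+1}^{(i,j)}(t) − ν_{k+1}^{(j,i)}(t). -/

import Mathlib

open Finset

/-- Single moments `β_i = Σ_p ξ_p^i c_p`. -/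
noncomputable def betaM (n : ℕ) (ξ c : Fin n → ℝ) (i : ℤ) : ℝ :=
  ∑ p : Fin n, ξ p ^ i * c p

/-- Bimoments `J_{i,j} = Σ_p Σ_q ξ_p^i ξ_q^j / (ξ_p + ξ_q) c_p c_q`. -/
noncomputable def Jmom (n : ℕ) (ξ c : Fin n → ℝ) (i j : ℤ) : ℝ :=
  ∑ p : Fin n, ∑ q : Fin n, ξ p ^ i * ξ q ^ j / (ξ p + ξ q) * (c p * c q)

/-- `τ_k^{(i,j)} = det (J_{i+r,j+s})_{0 ≤ r,s ≤ k-1}`, with `τ_0 = 1` and `τ_k = 0` for `k < 0`. -/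
noncomputable def tauDet (n : ℕ) (ξ c : Fin n → ℝ) (i j k : ℤ) : ℝ :=
  if k < 0 then 0
  else Matrix.det (Matrix.of fun r s : Fin k.toNat =>
    Jmom n ξ c (i + ((r : ℕ) : ℤ)) (j + ((s : ℕ) : ℤ)))

/-- `σ_k^{(i,j)}`: first column `(β_i, …, β_{i+k-1})ᵀ`, remaining block
`(J_{i+r,j+s})_{0 ≤ r ≤ k-1, 0 ≤ s ≤ k-2}`; `σ_1 = β_i` and `σ_k = 0` for `k < 1`. -/
noncomputable def sigmaDet (n : ℕ) (ξ c : Fin n → ℝ) (i j k : ℤ) : ℝ :=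
  if k < 1 then 0
  else Matrix.det (Matrix.of fun r s : Fin k.toNat =>
    if (s : ℕ) = 0 then betaM n ξ c (i + ((r : ℕ) : ℤ))
    else Jmom n ξ c (i + ((r : ℕ) : ℤ)) (j + (((s : ℕ) - 1 : ℕ) : ℤ)))

/-- `ρ_k^{(i,j)}`: `(1,1)` entry `0`, first row `(0, β_j, …, β_{j+k-2})`, first column
`(0, β_i, …, β_{i+k-2})ᵀ`, remaining block `(J_{i+r,j+s})_{0 ≤ r,s ≤ k-2}`;
`ρ_k = 0` for `k < 2`. -/
noncomputable def rhoDet (n : ℕ) (ξ c : Fin n → ℝ) (i j k : ℤ) : ℝ :=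
  if k < 2 then 0
  else Matrix.det (Matrix.of fun r s : Fin k.toNat =>
    if (r : ℕ) = 0 then
      (if (s : ℕ) = 0 then 0 else betaM n ξ c (j + (((s : ℕ) - 1 : ℕ) : ℤ)))
    else if (s : ℕ) = 0 then betaM n ξ c (i + (((r : ℕ) - 1 : ℕ) : ℤ))
    else Jmom n ξ c (i + (((r : ℕ) - 1 : ℕ) : ℤ)) (j + (((s : ℕ) - 1 : ℕ) : ℤ)))

/-- `ω_k^{(i,j)}`: the `k×k` determinant with rows indexed by `i, …, i+k-1` and columns
`J_{·,j}, …, J_{·,j+k-2}, J_{·,j+k}` (the last column index jumps an extra step);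
`ω_1 = J_{i,j+1}` and `ω_k = 0` for `k < 1`. -/
noncomputable def omegaDet (n : ℕ) (ξ c : Fin n → ℝ) (i j k : ℤ) : ℝ :=
  if k < 1 then 0
  else Matrix.det (Matrix.of fun r s : Fin k.toNat =>
    Jmom n ξ c (i + ((r : ℕ) : ℤ))
      (j + (if (s : ℕ) = k.toNat - 1 then ((s : ℕ) : ℤ) + 1 else ((s : ℕ) : ℤ))))

/-- `ν_k^{(i,j)}`: like `ρ_k^{(i,j)}` but with the last column index jumping an extra step,
i.e. first row `(0, β_j, …, β_{j+k-3}, β_{j+k-1})` and last `J`-column `(J_{i+r,j+k-1})_r`;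
`ν_k = 0` for `k < 2`. -/
noncomputable def nuDet (n : ℕ) (ξ c : Fin n → ℝ) (i j k : ℤ) : ℝ :=
  if k < 2 then 0
  else Matrix.det (Matrix.of fun r s : Fin k.toNat =>
    if (r : ℕ) = 0 then
      (if (s : ℕ) = 0 then 0
       else betaM n ξ c
         (j + (if (s : ℕ) = k.toNat - 1 then ((s : ℕ) : ℤ) else ((s : ℕ) : ℤ) - 1)))
    else if (s : ℕ) = 0 then betaM n ξ c (i + (((r : ℕ) - 1 : ℕ) : ℤ))
    else Jmom n ξ c (i + (((r : ℕ) - 1 : ℕ) : ℤ))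
      (j + (if (s : ℕ) = k.toNat - 1 then ((s : ℕ) : ℤ) else ((s : ℕ) : ℤ) - 1)))

/-- Time-dependent weights `c_p(t) = c_p(0) e^{ξ_p t}`. -/
noncomputable def cT (n : ℕ) (ξ c0 : Fin n → ℝ) (t : ℝ) : Fin n → ℝ :=
  fun p => c0 p * Real.exp (ξ p * t)

/-!
The weights satisfy `c_p' = ξ_p c_p`, so differentiating `J_{i,j}` cancels the denominator
`ξ_p + ξ_q`: the derivative is the rank-one expression `β_i β_j`, and the same cancellation gives
`β_i β_j = J_{i+1,j} + J_{i,j+1}`. By Jacobi's formula the derivative of `det J` is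
`trace (adj J * β βᵀ)` for any choice of row and column indices. Expanding a bordered determinant
identifies this trace with `-ρ` (consecutive columns) or `-ν` (last column jumped). Splitting `β βᵀ`
into two shifts of `J` instead identifies it with `ω^{(i,j)} + ω^{(j,i)}`: replacing a column of `J`
by the following one repeats a column, unless it is the last.
-/

section Determinants

open Matrix

variable {ι : Type*} [Fintype ι] [DecidableEq ι] {R : Type*} [CommRing R] {m : ℕ}

lemma trace_adjugate_mul_eq_sum_det_updateRow (A B : Matrix ι ι R) :
    trace (A.adjugate * B) = ∑ r, (A.updateRow r (B r)).det := by
  simp_rw [← cramer_transpose_apply, cramer_eq_adjugate_mulVec, ← adjugate_transpose,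
    mulVec_transpose, trace_mul_comm A.adjugate]
  rfl

/-- The matrix `A` bordered by the corner `a`, the first row `v` and the first column `u`. The
determinants `ρ` and `ν` are determinants of such matrices with corner `0`. -/
def borderedMatrix (a : R) (v u : Fin m → R) (A : Matrix (Fin m) (Fin m) R) :
    Matrix (Fin (m + 1)) (Fin (m + 1)) R :=
  of (Fin.cons (Fin.cons a v) fun r => Fin.cons (u r) (A r))

lemma adjugate_borderedMatrix_zero_succ (a : R) (v u : Fin m → R) (A : Matrix (Fin m) (Fin m) R)
    (r : Fin m) : (borderedMatrix a v u A).adjugate 0 r.succ = -(A.updateRow r v).det := by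
  set M := (borderedMatrix a v u A).updateRow r.succ (Pi.single 0 1)
  set swapped := M.submatrix (Equiv.swap 0 r.succ) id
  have det_swapped : swapped.det = -M.det := by
    rw [det_permute, Equiv.Perm.sign_swap (Fin.succ_ne_zero r).symm, Units.val_neg, Units.val_one,
      Int.cast_neg, Int.cast_one, neg_one_mul]
  have swapped_zero : swapped 0 = Pi.single 0 1 := by
    ext s
    simp [swapped, M]
  have minor_swapped : swapped.submatrix Fin.succ Fin.succ = A.updateRow r v := by
    ext x y
    rcases eq_or_ne x r with rfl | hx
    · simp [swapped, M, borderedMatrix, updateRow_apply, (Fin.succ_ne_zero x).symm]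
    · have : Equiv.swap 0 r.succ x.succ = x.succ :=
        Equiv.swap_apply_of_ne_of_ne (Fin.succ_ne_zero x) (by simpa using hx)
      simp [swapped, M, borderedMatrix, updateRow_apply, this, hx]
  rw [adjugate_apply, ← neg_eq_iff_eq_neg, ← det_swapped, det_succ_row_zero, Fin.sum_univ_succ]
  simp [swapped_zero, minor_swapped]

lemma det_borderedMatrix (a : R) (v u : Fin m → R) (A : Matrix (Fin m) (Fin m) R) :
    (borderedMatrix a v u A).det = a * A.det - trace (A.adjugate * vecMulVec u v) := by
  have corner : (borderedMatrix a v u A).adjugate 0 0 = A.det := by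
    rw [adjugate_fin_succ_eq_det_submatrix, Fin.val_zero, add_zero, pow_zero, one_mul]
    rfl
  have cofactors : trace (A.adjugate * vecMulVec u v) = ∑ r, u r * (A.updateRow r v).det := by
    simp_rw [trace_adjugate_mul_eq_sum_det_updateRow, ← det_updateRow_smul]
    rfl
  rw [det_eq_sum_mul_adjugate_col _ 0, Fin.sum_univ_succ, corner, cofactors, sub_eq_add_neg,
    ← sum_neg_distrib]
  simp only [adjugate_borderedMatrix_zero_succ, mul_neg]
  rfl

/-- Only the last column survives because `adjugate A * A` is diagonal. -/
lemma trace_adjugate_mul_of_col_shift {A B : Matrix (Fin (m + 1)) (Fin (m + 1)) R}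
    (hB : ∀ r (s : Fin m), B r s.castSucc = A r s.succ) :
    trace (A.adjugate * B) = (A.updateCol (Fin.last m) (B.col (Fin.last m))).det := by
  have shifted (s : Fin m) : (A.adjugate * B) s.castSucc s.castSucc = 0 := calc
    _ = (A.adjugate * A) s.castSucc s.succ := by simp only [mul_apply, hB]
    _ = 0 := by simp [adjugate_mul, Fin.castSucc_lt_succ.ne]
  rw [trace, Fin.sum_univ_castSucc, ← cramer_apply, cramer_eq_adjugate_mulVec]
  simp only [diag_apply, shifted, sum_const_zero, zero_add]
  rfl

lemma hasDerivAt_det {𝕜 : Type*} [NontriviallyNormedField 𝕜] {A : 𝕜 → Matrix ι ι 𝕜}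
    {A' : Matrix ι ι 𝕜} {t : 𝕜} (hA : ∀ r s, HasDerivAt (fun x => A x r s) (A' r s) t) :
    HasDerivAt (fun x => (A x).det) (trace ((A t).adjugate * A')) t := by
  let detRow : ContinuousMultilinearMap 𝕜 (fun _ : ι => ι → 𝕜) 𝕜 :=
    ⟨detRowAlternating.toMultilinearMap, Continuous.matrix_det (A := of) continuous_id⟩
  have hrow (r : ι) := (hasDerivAt_pi.2 (hA r)).hasFDerivAt
  refine (HasFDerivAt.multilinear_comp detRow hrow).hasDerivAt.congr_deriv ?_
  rw [trace_adjugate_mul_eq_sum_det_updateRow, _root_.sum_apply]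
  refine sum_congr rfl fun r _ => ?_
  rw [ContinuousLinearMap.comp_apply, ContinuousLinearMap.toSpanSingleton_apply, one_smul]
  rfl

end Determinants

section Moments

open Matrix

variable {n : ℕ}

/-- The matrix of bimoments `J_{f r, g s}` with row indices `f` and column indices `g`. -/
noncomputable def bimomentMatrix {ι κ : Type*} (ξ c : Fin n → ℝ) (f : ι → ℤ) (g : κ → ℤ) :
    Matrix ι κ ℝ :=
  of fun r s => Jmom n ξ c (f r) (g s)

variable {ι κ : Type*} {ξ : Fin n → ℝ}

lemma Jmom_comm (c : Fin n → ℝ) (i j : ℤ) : Jmom n ξ c i j = Jmom n ξ c j i := by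
  rw [Jmom, Jmom, sum_comm]
  refine sum_congr rfl fun p _ => sum_congr rfl fun q _ => ?_
  rw [add_comm (ξ q)]
  ring

lemma betaM_mul_betaM (hξ : ∀ p q, ξ p + ξ q ≠ 0) (c : Fin n → ℝ) (i j : ℤ) :
    betaM n ξ c i * betaM n ξ c j = Jmom n ξ c (i + 1) j + Jmom n ξ c i (j + 1) := by
  have hξ0 (p : Fin n) : ξ p ≠ 0 := fun h => hξ p p (by simp [h])
  simp only [betaM, Jmom, sum_mul_sum, ← sum_add_distrib]
  refine sum_congr rfl fun p _ => sum_congr rfl fun q _ => ?_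
  rw [zpow_add_one₀ (hξ0 p), zpow_add_one₀ (hξ0 q)]
  field_simp [hξ p q]

lemma hasDerivAt_Jmom (hξ : ∀ p q, ξ p + ξ q ≠ 0) {c : ℝ → Fin n → ℝ} {t : ℝ}
    (hc : ∀ p, HasDerivAt (fun s => c s p) (ξ p * c t p) t) (i j : ℤ) :
    HasDerivAt (fun s => Jmom n ξ (c s) i j) (betaM n ξ (c t) i * betaM n ξ (c t) j) t := by
  rw [betaM, betaM, sum_mul_sum]
  refine HasDerivAt.fun_sum fun p _ => HasDerivAt.fun_sum fun q _ => ?_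
  refine (((hc p).mul (hc q)).const_mul _).congr_deriv ?_
  field_simp [hξ p q]

lemma hasDerivAt_cT (c0 : Fin n → ℝ) (t : ℝ) (p : Fin n) :
    HasDerivAt (fun s => cT n ξ c0 s p) (ξ p * cT n ξ c0 t p) t := by
  refine (((hasDerivAt_id t).const_mul (ξ p)).exp.const_mul (c0 p)).congr_deriv ?_
  simp only [cT, id]
  ring

lemma transpose_bimomentMatrix (c : Fin n → ℝ) (f : ι → ℤ) (g : κ → ℤ) :
    (bimomentMatrix ξ c f g)ᵀ = bimomentMatrix ξ c g f := by
  ext r s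
  exact Jmom_comm c _ _

lemma vecMulVec_betaM (hξ : ∀ p q, ξ p + ξ q ≠ 0) (c : Fin n → ℝ)
    (f : ι → ℤ) (g : κ → ℤ) :
    vecMulVec (betaM n ξ c ∘ f) (betaM n ξ c ∘ g) =
      bimomentMatrix ξ c (f + 1) g + bimomentMatrix ξ c f (g + 1) := by
  ext r s
  exact betaM_mul_betaM hξ c _ _

lemma hasDerivAt_det_bimomentMatrix (hξ : ∀ p q, ξ p + ξ q ≠ 0) {c : ℝ → Fin n → ℝ} {t : ℝ}
    (hc : ∀ p, HasDerivAt (fun s => c s p) (ξ p * c t p) t) {m : ℕ} (f g : Fin m → ℤ) :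
    HasDerivAt (fun s => (bimomentMatrix ξ (c s) f g).det)
      (-(borderedMatrix 0 (betaM n ξ (c t) ∘ g) (betaM n ξ (c t) ∘ f)
        (bimomentMatrix ξ (c t) f g)).det) t := by
  rw [det_borderedMatrix, zero_mul, zero_sub, neg_neg]
  exact hasDerivAt_det fun r s => hasDerivAt_Jmom hξ hc (f r) (g s)

end Moments

section BimomentDeterminants

open Matrix

/-- The consecutive indices `j, j + 1, …, j + m - 1`. -/
def consecutive (j : ℤ) (m : ℕ) : Fin m → ℤ := fun s => j + (s : ℕ)

/-- The indices `j, …, j + m - 1, j + m + 1` of the columns of `ω_{m+1}`: consecutive, except that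
the last one jumps an extra step. -/
def jumpConsecutive (j : ℤ) (m : ℕ) : Fin (m + 1) → ℤ :=
  Function.update (consecutive j (m + 1)) (Fin.last m) (j + m + 1)

lemma jumpConsecutive_apply (j : ℤ) (m : ℕ) (s : Fin (m + 1)) :
    jumpConsecutive j m s = j + if (s : ℕ) = m then ((s : ℕ) : ℤ) + 1 else (s : ℕ) := by
  rcases eq_or_ne s (Fin.last m) with rfl | hs
  · simp [jumpConsecutive, add_assoc]
  · have : (s : ℕ) ≠ m := by simpa [Fin.ext_iff] using hs
    simp [jumpConsecutive, consecutive, hs, this]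

variable {n : ℕ} (ξ c : Fin n → ℝ) (i j : ℤ) (m : ℕ)

lemma tauDet_natCast :
    tauDet n ξ c i j m = (bimomentMatrix ξ c (consecutive i m) (consecutive j m)).det := by
  rw [tauDet, if_neg (by lia)]
  rfl

lemma rhoDet_natCast_add_one :
    rhoDet n ξ c i j (m + 1) =
      (borderedMatrix 0 (betaM n ξ c ∘ consecutive j m) (betaM n ξ c ∘ consecutive i m)
        (bimomentMatrix ξ c (consecutive i m) (consecutive j m))).det := by
  obtain rfl | hm := m.eq_zero_or_pos
  · simp [rhoDet, borderedMatrix]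
  rw [rhoDet, if_neg (by lia)]
  change det (n := Fin (m + 1)) _ = _
  congr 1
  ext r s
  cases r using Fin.cases <;> cases s using Fin.cases <;>
    simp [borderedMatrix, bimomentMatrix, consecutive]

lemma omegaDet_natCast_succ :
    omegaDet n ξ c i j (m + 1 : ℕ) =
      (bimomentMatrix ξ c (consecutive i (m + 1)) (jumpConsecutive j m)).det := by
  rw [omegaDet, if_neg (by lia)]
  change det (n := Fin (m + 1)) _ = _
  congr 1
  ext r s
  simp [bimomentMatrix, consecutive, jumpConsecutive_apply]

lemma nuDet_natCast_succ_add_one :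
    nuDet n ξ c i j ((m + 1 : ℕ) + 1) =
      (borderedMatrix 0 (betaM n ξ c ∘ jumpConsecutive j m)
        (betaM n ξ c ∘ consecutive i (m + 1))
        (bimomentMatrix ξ c (consecutive i (m + 1)) (jumpConsecutive j m))).det := by
  rw [nuDet, if_neg (by lia)]
  change det (n := Fin (m + 1 + 1)) _ = _
  have last_index : (((m + 1 : ℕ) : ℤ) + 1).toNat - 1 = m + 1 := by lia
  congr 1
  ext r s
  cases r using Fin.cases <;> cases s using Fin.cases <;>
    simp only [borderedMatrix, bimomentMatrix, last_index] <;>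
    simp [consecutive, jumpConsecutive_apply]

lemma omegaDet_natCast_eq_trace :
    omegaDet n ξ c i j m =
      trace ((bimomentMatrix ξ c (consecutive i m) (consecutive j m)).adjugate *
        bimomentMatrix ξ c (consecutive i m) (consecutive j m + 1)) := by
  cases m with
  | zero => simp [omegaDet]
  | succ m =>
    rw [omegaDet_natCast_succ, trace_adjugate_mul_of_col_shift]
    · congr 1
      ext r s
      rcases eq_or_ne s (Fin.last m) with rfl | hs
      · simp [bimomentMatrix, jumpConsecutive, consecutive]
      · simp [bimomentMatrix, jumpConsecutive, hs]
    · intro r s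
      simp [bimomentMatrix, consecutive, add_assoc]

lemma omegaDet_natCast_swap_eq_trace :
    omegaDet n ξ c j i m =
      trace ((bimomentMatrix ξ c (consecutive i m) (consecutive j m)).adjugate *
        bimomentMatrix ξ c (consecutive i m + 1) (consecutive j m)) := by
  rw [omegaDet_natCast_eq_trace, ← trace_transpose, transpose_mul, adjugate_transpose,
    transpose_bimomentMatrix, transpose_bimomentMatrix, trace_mul_comm]

variable {ξ}

lemma neg_rhoDet_eq_omegaDet_add_omegaDet (hξ : ∀ p q, ξ p + ξ q ≠ 0) :
    -rhoDet n ξ c i j (m + 1) = omegaDet n ξ c i j m + omegaDet n ξ c j i m := by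
  rw [rhoDet_natCast_add_one, det_borderedMatrix, zero_mul, zero_sub, neg_neg,
    vecMulVec_betaM hξ, mul_add, trace_add, ← omegaDet_natCast_swap_eq_trace,
    ← omegaDet_natCast_eq_trace, add_comm]

variable {c : ℝ → Fin n → ℝ} {t : ℝ}

lemma hasDerivAt_tauDet (hξ : ∀ p q, ξ p + ξ q ≠ 0)
    (hc : ∀ p, HasDerivAt (fun s => c s p) (ξ p * c t p) t) :
    HasDerivAt (fun s => tauDet n ξ (c s) i j m) (-rhoDet n ξ (c t) i j (m + 1)) t := by
  simp only [tauDet_natCast, rhoDet_natCast_add_one]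
  exact hasDerivAt_det_bimomentMatrix hξ hc _ _

lemma hasDerivAt_omegaDet (hξ : ∀ p q, ξ p + ξ q ≠ 0)
    (hc : ∀ p, HasDerivAt (fun s => c s p) (ξ p * c t p) t) :
    HasDerivAt (fun s => omegaDet n ξ (c s) i j m) (-nuDet n ξ (c t) i j (m + 1)) t := by
  cases m with
  | zero => simpa [nuDet, omegaDet] using hasDerivAt_const t (0 : ℝ)
  | succ m =>
    simp only [omegaDet_natCast_succ, nuDet_natCast_succ_add_one]
    exact hasDerivAt_det_bimomentMatrix hξ hc _ _

end BimomentDeterminants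

theorem stmt_15_general {n : ℕ} {ξ : Fin n → ℝ} (hξ : ∀ p q, ξ p + ξ q ≠ 0)
    {c : ℝ → Fin n → ℝ} (hc : ∀ t p, HasDerivAt (fun s => c s p) (ξ p * c t p) t)
    (i j : ℤ) {k : ℤ} (hk : 0 ≤ k) (t : ℝ) :
    HasDerivAt (fun s => tauDet n ξ (c s) i j k) (-rhoDet n ξ (c t) i j (k + 1)) t ∧
    HasDerivAt (fun s => tauDet n ξ (c s) i j k)
      (omegaDet n ξ (c t) i j k + omegaDet n ξ (c t) j i k) t ∧
    HasDerivAt (deriv fun s => tauDet n ξ (c s) i j k)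
      (-nuDet n ξ (c t) i j (k + 1) - nuDet n ξ (c t) j i (k + 1)) t := by
  lift k to ℕ using hk
  have tau_rho (t : ℝ) := hasDerivAt_tauDet i j k hξ (hc t)
  have tau_omega (t : ℝ) := (tau_rho t).congr_deriv
    (neg_rhoDet_eq_omegaDet_add_omegaDet (c t) i j k hξ)
  have deriv_tau := funext fun t => (tau_omega t).deriv
  refine ⟨tau_rho t, tau_omega t, ?_⟩
  rw [deriv_tau, sub_eq_add_neg]
  exact (hasDerivAt_omegaDet i j k hξ (hc t)).add (hasDerivAt_omegaDet j i k hξ (hc t))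

/-- Lemma 3.2: under `c_p(t) = c_p(0) e^{ξ_p t}`, for all `i, j ∈ ℤ`, `k ≥ 0`, `t ∈ ℝ`:
`τ_k^{(i,j)}` is twice differentiable with
`(d/dt) τ_k^{(i,j)} = -ρ_{k+1}^{(i,j)}`,
`(d/dt) τ_k^{(i,j)} = ω_k^{(i,j)} + ω_k^{(j,i)}`, and
`(d²/dt²) τ_k^{(i,j)} = -ν_{k+1}^{(i,j)} - ν_{k+1}^{(j,i)}`. -/
theorem stmt_15 (n : ℕ) (hn : 1 ≤ n) (ξ c0 : Fin n → ℝ)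
    (hξ0 : ∀ p, 0 < ξ p) (hξmono : StrictMono ξ) (hc : ∀ p, 0 < c0 p)
    (i j k : ℤ) (hk : 0 ≤ k) (t : ℝ) :
    HasDerivAt (fun s => tauDet n ξ (cT n ξ c0 s) i j k)
      (-(rhoDet n ξ (cT n ξ c0 t) i j (k + 1))) t ∧
    HasDerivAt (fun s => tauDet n ξ (cT n ξ c0 s) i j k)
      (omegaDet n ξ (cT n ξ c0 t) i j k + omegaDet n ξ (cT n ξ c0 t) j i k) t ∧
    HasDerivAt (deriv (fun s => tauDet n ξ (cT n ξ c0 s) i j k))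
      (-(nuDet n ξ (cT n ξ c0 t) i j (k + 1)) - nuDet n ξ (cT n ξ c0 t) j i (k + 1)) t :=
  stmt_15_general (fun p q => (add_pos (hξ0 p) (hξ0 q)).ne') (hasDerivAt_cT c0) i j hk t
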